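/- For every integer r ≥ 1, the map P_r : M_{r,∞} → ℤ₂^× sending σ to its common value P_r(σ) is a group homomorphism whose kernel is exactly B_{r,∞}. -/

import Mathlib

/-- Nodes of the infinite binary rooted tree `T_∞` are finite words over `{a,b}`,
encoded as `List Bool` with `a = false` and `b = true`; children of `w` are
`w ++ [false]` and `w ++ [true]`. An automorphism of `T_∞`. -/
def IsTreeAut (σ : List Bool → List Bool) : Prop :=
  Function.Bijective σ ∧ (∀ w, (σ w).length = w.length) ∧
    ∀ w s, ∃ t, σ (w ++ [s]) = σ w ++ [t]

/-- The parity `Par(σ,x) ∈ {0,1}`: `0` if `σ(xa) = σ(x)a`, and `1` otherwise. -/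
def par (σ : List Bool → List Bool) (x : List Bool) : ℕ :=
  if σ (x ++ [false]) = σ x ++ [false] then 0 else 1

/-- `W(r,i)`: the words `s₁ ⋯ s_{ri−1}` of length `r*i − 1` over `{a,b}` with
`s_j = a` whenever `r ∣ j`. -/
noncomputable def Wset (r i : ℕ) : Finset (List Bool) :=
  ((Finset.univ : Finset (Fin (r*i-1) → Bool)).filter
    (fun s => ∀ j : Fin (r*i-1), r ∣ (j:ℕ)+1 → s j = false)).image List.ofFn

/-- `Q_r(σ,x) := Σ_{i≥1} 2^i Σ_{w ∈ W(r,i)} Par(σ, xw)` in `ℤ₂`. -/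
noncomputable def Qr (r : ℕ) (σ : List Bool → List Bool) (x : List Bool) : ℤ_[2] :=
  ∑' i : ℕ, (2:ℤ_[2])^(i+1) * ∑ w ∈ Wset r (i+1), (par σ (x ++ w) : ℤ_[2])

/-- `P_r(σ,x) := (−1)^{Par(σ,x)} + Q_r(σ,xb) − Q_r(σ,xa)` in `ℤ₂`. -/
noncomputable def Pr (r : ℕ) (σ : List Bool → List Bool) (x : List Bool) : ℤ_[2] :=
  (-1:ℤ_[2])^(par σ x) + Qr r σ (x ++ [true]) - Qr r σ (x ++ [false])

/-- `M_{r,∞}`: tree automorphisms for which `P_r(σ,·)` is constant. -/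
def Mset (r : ℕ) : Set (List Bool → List Bool) :=
  {σ | IsTreeAut σ ∧ ∀ x₁ x₂ : List Bool, Pr r σ x₁ = Pr r σ x₂}

/-- `B_{r,∞}`: elements of `M_{r,∞}` with common value `P_r(σ) = 1`. -/
def Bset (r : ℕ) : Set (List Bool → List Bool) :=
  {σ | σ ∈ Mset r ∧ Pr r σ [] = 1}

/-! Splitting off the first `r` letters of a word of `W(r, i + 1)` turns the series `Q_r(σ, ·)` into
the recursion `Q(x) = 2 ∑ (Par(σ, xw) + Q(xwa))` over all words `w` of length `r - 1`. It has only
one solution, because the difference of two solutions is divisible by every power of `2`. For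
`σ ∈ M_{r,∞}` with value `P`, the function `x ↦ Q_r(σ, τ x) + P * Q_r(τ, x)` solves the recursion of
`σ ∘ τ`, hence is `Q_r(σ ∘ τ, x)`, and multiplicativity of `P_r` follows. Values of `P_r` are units
since they are congruent to `±1` modulo `2`. -/

theorem summable_padicInt_pow_mul {p : ℕ} [Fact p.Prime] (a : ℕ → ℤ_[p]) :
    Summable fun i => (p : ℤ_[p]) ^ i * a i := by
  have hp : (p : ℝ)⁻¹ < 1 := inv_lt_one_of_one_lt₀ (mod_cast (Fact.out : p.Prime).one_lt)
  refine .of_norm_bounded (summable_geometric_of_lt_one (by positivity) hp) fun i => ?_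
  rw [norm_mul, norm_pow, PadicInt.norm_p]
  exact mul_le_of_le_one_right (by positivity) (PadicInt.norm_le_one _)

theorem eq_of_forall_eq_mul_sum_add {R α ι : Type*} [CommRing R] [IsDomain R] [WfDvdMonoid R]
    {q : R} (hq : ¬IsUnit q) {s : Finset ι} {c : α → ι → α} {b : α → ι → R} {f g : α → R}
    (hf : ∀ x, f x = q * ∑ i ∈ s, (b x i + f (c x i)))
    (hg : ∀ x, g x = q * ∑ i ∈ s, (b x i + g (c x i))) : f = g := by
  have sub_eq (x : α) : f x - g x = q * ∑ i ∈ s, (f (c x i) - g (c x i)) := by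
    rw [hf x, hg x, ← mul_sub, ← Finset.sum_sub_distrib]
    simp only [add_sub_add_left_eq_sub]
  have pow_dvd_sub (n : ℕ) : ∀ x, q ^ n ∣ f x - g x := by
    induction n with
    | zero => simp
    | succ n ih =>
      intro x
      rw [sub_eq, pow_succ']
      exact mul_dvd_mul_left _ (Finset.dvd_sum fun i _ => ih _)
  funext x
  by_contra hne
  obtain ⟨n, hn⟩ := FiniteMultiplicity.of_not_isUnit hq (sub_ne_zero.2 hne)
  exact hn (pow_dvd_sub _ x)

theorem not_isUnit_two_padicInt : ¬IsUnit (2 : ℤ_[2]) :=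
  mod_cast (PadicInt.prime_p (p := 2)).not_isUnit

section Words

variable {r i : ℕ} {w v : List Bool}

theorem mem_Wset :
    w ∈ Wset r i ↔ w.length = r * i - 1 ∧ ∀ j, r ∣ j + 1 → w.getD j false = false := by
  simp only [Wset, Finset.mem_image, Finset.mem_filter, Finset.mem_univ, true_and]
  constructor
  · rintro ⟨s, hs, rfl⟩
    refine ⟨List.length_ofFn, fun j hj => ?_⟩
    by_cases hlt : j < r * i - 1
    · simpa [hlt] using hs ⟨j, hlt⟩ hj
    · simp [hlt]
  · rintro ⟨hlen, hw⟩
    refine ⟨fun j => w.getD j false, fun j hj => hw j hj, List.ext_getElem (by simp [hlen]) ?_⟩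
    intro j _ hj
    simp [hj]

theorem mem_Wset_one : w ∈ Wset r 1 ↔ w.length = r - 1 := by
  rw [mem_Wset, mul_one, and_iff_left_iff_imp]
  intro hlen j hj
  have hrj : r ≤ j + 1 := Nat.le_of_dvd j.succ_pos hj
  exact List.getD_eq_default _ _ (by omega)

theorem append_cons_mem_Wset_iff (hr : 1 ≤ r) (hw : w.length = r - 1) :
    w ++ false :: v ∈ Wset r (i + 2) ↔ v ∈ Wset r (i + 1) := by
  have hmul : r * (i + 2) = r * (i + 1) + r := by ring
  have hpos : 1 ≤ r * (i + 1) := Nat.mul_pos hr i.succ_pos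
  have dvd_add (j : ℕ) : r ∣ j + r + 1 ↔ r ∣ j + 1 := by
    rw [add_right_comm, Nat.dvd_add_self_right]
  have getD_add (j : ℕ) : (w ++ false :: v).getD (j + r) false = v.getD j false := by
    rw [List.getD_append_right _ _ _ _ (by omega), show j + r - w.length = j + 1 by omega,
      List.getD_cons_succ]
  have getD_pred : (w ++ false :: v).getD (r - 1) false = false := by
    rw [List.getD_append_right _ _ _ _ hw.le, hw, Nat.sub_self, List.getD_cons_zero]
  rw [mem_Wset, mem_Wset, List.length_append, List.length_cons]
  refine and_congr (by omega) ⟨fun h j hj => ?_, fun h j hj => ?_⟩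
  · rw [← getD_add]
    exact h _ ((dvd_add j).2 hj)
  · have hrj : r ≤ j + 1 := Nat.le_of_dvd j.succ_pos hj
    obtain rfl | hlt : j = r - 1 ∨ r ≤ j := by omega
    · exact getD_pred
    · obtain ⟨k, rfl⟩ := Nat.exists_eq_add_of_le' hlt
      rw [getD_add]
      exact h k ((dvd_add k).1 hj)

theorem exists_append_cons_of_mem_Wset (hr : 1 ≤ r) (hw : w ∈ Wset r (i + 2)) :
    ∃ u v, u.length = r - 1 ∧ u ++ false :: v = w := by
  obtain ⟨hlen, hfalse⟩ := mem_Wset.1 hw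
  have hlt : r - 1 < w.length := by
    have : r * (i + 2) = r * (i + 1) + r := by ring
    have : 1 ≤ r * (i + 1) := Nat.mul_pos hr i.succ_pos
    omega
  have hletter : w[r - 1] = false := by
    simpa [hlt] using hfalse (r - 1) (by rw [Nat.sub_add_cancel hr])
  refine ⟨w.take (r - 1), w.drop (r - 1 + 1), by simp [hlt.le], ?_⟩
  rw [← hletter, ← List.drop_eq_getElem_cons hlt, List.take_append_drop]

theorem sum_Wset_add_two {M : Type*} [AddCommMonoid M] (hr : 1 ≤ r) (i : ℕ)
    (f : List Bool → M) :
    ∑ u ∈ Wset r (i + 2), f u = ∑ w ∈ Wset r 1, ∑ v ∈ Wset r (i + 1), f (w ++ false :: v) := by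
  rw [← Finset.sum_product']
  symm
  refine Finset.sum_nbij (fun p : List Bool × List Bool => p.1 ++ false :: p.2) ?_ ?_ ?_
    fun _ _ => rfl
  · rintro ⟨w, v⟩ h
    rw [Finset.mem_product, mem_Wset_one] at h
    exact (append_cons_mem_Wset_iff hr h.1).2 h.2
  · rintro ⟨w, v⟩ h ⟨w', v'⟩ h' heq
    simp only [Finset.coe_product, Set.mem_prod, Finset.mem_coe, mem_Wset_one] at h h'
    obtain ⟨rfl, htail⟩ := List.append_inj heq (h.1.trans h'.1.symm)
    exact Prod.ext rfl (List.tail_eq_of_cons_eq htail)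
  · intro u hu
    obtain ⟨w, v, hw, rfl⟩ := exists_append_cons_of_mem_Wset hr hu
    exact ⟨(w, v), Finset.mem_coe.2 <| Finset.mem_product.2
      ⟨mem_Wset_one.2 hw, (append_cons_mem_Wset_iff hr hw).1 hu⟩, rfl⟩

end Words

theorem neg_one_pow_par {R : Type*} [CommRing R] (σ : List Bool → List Bool) (x : List Bool) :
    (-1 : R) ^ par σ x = 1 - 2 * par σ x := by
  unfold par
  split_ifs <;> norm_num

namespace IsTreeAut

variable {σ τ : List Bool → List Bool}

theorem prefix_apply_append (hσ : IsTreeAut σ) (x w : List Bool) : σ x <+: σ (x ++ w) := by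
  induction w using List.reverseRecOn with
  | nil => rw [List.append_nil]
  | append_singleton w s ih =>
    obtain ⟨t, ht⟩ := hσ.2.2 (x ++ w) s
    rw [← List.append_assoc, ht]
    exact ih.trans (List.prefix_append _ _)

theorem sum_Wset_one_apply_append {M : Type*} [AddCommMonoid M] (hσ : IsTreeAut σ) (r : ℕ)
    (x : List Bool) (f : List Bool → M) :
    ∑ w ∈ Wset r 1, f (σ (x ++ w)) = ∑ w ∈ Wset r 1, f (σ x ++ w) := by
  choose g hg using hσ.prefix_apply_append x
  have length_g (w : List Bool) : (g w).length = w.length := by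
    simpa [hσ.2.1] using congrArg List.length (hg w)
  have mapsTo : Set.MapsTo g (Wset r 1) (Wset r 1) := fun w hw => by
    rw [Finset.mem_coe, mem_Wset_one] at hw ⊢
    rw [length_g, hw]
  have injOn : Set.InjOn g (Wset r 1) := fun v _ w _ hvw =>
    List.append_cancel_left (hσ.1.1 (by rw [← hg v, ← hg w, hvw]))
  exact Finset.sum_nbij g mapsTo injOn (Finset.surjOn_of_injOn_of_card_le _ mapsTo injOn le_rfl)
    fun w _ => by rw [hg]

theorem par_cases (hσ : IsTreeAut σ) (x : List Bool) :
    (par σ x = 0 ∧ ∀ s, σ (x ++ [s]) = σ x ++ [s]) ∨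
      (par σ x = 1 ∧ ∀ s, σ (x ++ [s]) = σ x ++ [!s]) := by
  obtain ⟨s, hs⟩ := hσ.2.2 x false
  obtain ⟨t, ht⟩ := hσ.2.2 x true
  have hne : s ≠ t := by
    rintro rfl
    simpa using hσ.1.1 (hs.trans ht.symm)
  cases s <;> cases t <;> simp_all [par]

variable {R : Type*} [CommRing R]

theorem par_comp (hσ : IsTreeAut σ) (hτ : IsTreeAut τ) (x : List Bool) :
    (par (σ ∘ τ) x : R) = par σ (τ x) + (-1) ^ par σ (τ x) * par τ x := by
  obtain ⟨hpτ, hxτ⟩ | ⟨hpτ, hxτ⟩ := hτ.par_cases x <;>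
  obtain ⟨hpσ, hxσ⟩ | ⟨hpσ, hxσ⟩ := hσ.par_cases (τ x) <;>
  simp [par.eq_def (σ ∘ τ), hpτ, hxτ, hpσ, hxσ]

theorem apply_append_false (hσ : IsTreeAut σ) (x : List Bool) (F : List Bool → R) :
    F (σ (x ++ [false])) =
      F (σ x ++ [false]) + par σ x * (F (σ x ++ [true]) - F (σ x ++ [false])) := by
  obtain ⟨hp, hx⟩ | ⟨hp, hx⟩ := hσ.par_cases x <;> simp [hp, hx]

theorem apply_append_true_sub_apply_append_false (hσ : IsTreeAut σ) (x : List Bool)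
    (F : List Bool → R) :
    F (σ (x ++ [true])) - F (σ (x ++ [false])) =
      (-1) ^ par σ x * (F (σ x ++ [true]) - F (σ x ++ [false])) := by
  obtain ⟨hp, hx⟩ | ⟨hp, hx⟩ := hσ.par_cases x <;> simp [hp, hx]

theorem neg_one_pow_par_comp (hσ : IsTreeAut σ) (hτ : IsTreeAut τ) (x : List Bool) :
    (-1 : R) ^ par (σ ∘ τ) x = (-1) ^ par σ (τ x) * (-1) ^ par τ x := by
  rw [neg_one_pow_par (σ ∘ τ), hσ.par_comp hτ, neg_one_pow_par τ, neg_one_pow_par σ]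
  ring

end IsTreeAut

section Series

variable {r : ℕ} {σ τ : List Bool → List Bool}

theorem summable_Qr (r : ℕ) (σ : List Bool → List Bool) (x : List Bool) :
    Summable fun i : ℕ =>
      (2 : ℤ_[2]) ^ (i + 1) * ∑ w ∈ Wset r (i + 1), (par σ (x ++ w) : ℤ_[2]) := by
  simpa only [pow_succ, mul_assoc, Nat.cast_ofNat] using
    summable_padicInt_pow_mul (p := 2) fun i =>
      2 * ∑ w ∈ Wset r (i + 1), (par σ (x ++ w) : ℤ_[2])

theorem two_dvd_Qr (r : ℕ) (σ : List Bool → List Bool) (x : List Bool) : 2 ∣ Qr r σ x := by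
  have hsum := summable_padicInt_pow_mul fun i => ∑ w ∈ Wset r (i + 1), (par σ (x ++ w) : ℤ_[2])
  simp only [Nat.cast_ofNat] at hsum
  simp only [Qr, pow_succ', mul_assoc, hsum.tsum_mul_left, dvd_mul_right]

theorem Qr_eq_two_mul_sum (hr : 1 ≤ r) (σ : List Bool → List Bool) (x : List Bool) :
    Qr r σ x =
      2 * ∑ w ∈ Wset r 1, ((par σ (x ++ w) : ℤ_[2]) + Qr r σ (x ++ w ++ [false])) := by
  have hsum (w : List Bool) := summable_Qr r σ (x ++ w ++ [false])
  have term_succ (i : ℕ) :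
      (2 : ℤ_[2]) ^ (i + 1 + 1) * ∑ u ∈ Wset r (i + 2), (par σ (x ++ u) : ℤ_[2]) =
        2 * ∑ w ∈ Wset r 1, 2 ^ (i + 1) *
          ∑ v ∈ Wset r (i + 1), (par σ (x ++ w ++ [false] ++ v) : ℤ_[2]) := by
    rw [sum_Wset_add_two hr, ← Finset.mul_sum, ← mul_assoc, ← pow_succ']
    simp only [List.append_assoc, List.singleton_append]
  rw [Finset.sum_add_distrib, mul_add, Qr, (summable_Qr r σ x).tsum_eq_zero_add]
  simp only [zero_add, pow_one, term_succ]
  rw [(summable_sum fun w _ => hsum w).tsum_mul_left, Summable.tsum_finsetSum fun w _ => hsum w]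
  rfl

theorem Qr_comp (hr : 1 ≤ r) (hσ : σ ∈ Mset r) (hτ : IsTreeAut τ) (x : List Bool) :
    Qr r (σ ∘ τ) x = Qr r σ (τ x) + Pr r σ [] * Qr r τ x := by
  refine congrFun (eq_of_forall_eq_mul_sum_add not_isUnit_two_padicInt
    (c := fun x w => x ++ w ++ [false]) (g := fun x => Qr r σ (τ x) + Pr r σ [] * Qr r τ x)
    (Qr_eq_two_mul_sum hr (σ ∘ τ)) fun x => ?_) x
  rw [Qr_eq_two_mul_sum hr σ (τ x), Qr_eq_two_mul_sum hr τ x,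
    ← hτ.sum_Wset_one_apply_append r x fun y => (par σ y : ℤ_[2]) + Qr r σ (y ++ [false]),
    mul_left_comm, ← mul_add, Finset.mul_sum, ← Finset.sum_add_distrib]
  congr! 2 with w
  generalize x ++ w = y
  have hP : Pr r σ [] =
      (-1) ^ par σ (τ y) + Qr r σ (τ y ++ [true]) - Qr r σ (τ y ++ [false]) := hσ.2 _ _
  rw [hσ.1.par_comp hτ, hτ.apply_append_false y (Qr r σ)]
  linear_combination (par τ y : ℤ_[2]) * hP

theorem isUnit_Pr (r : ℕ) (σ : List Bool → List Bool) (x : List Bool) : IsUnit (Pr r σ x) := by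
  have hdvd : 2 ∣ Qr r σ (x ++ [true]) - Qr r σ (x ++ [false]) :=
    dvd_sub (two_dvd_Qr r σ _) (two_dvd_Qr r σ _)
  have hmem : Qr r σ (x ++ [true]) - Qr r σ (x ++ [false]) ∈ IsLocalRing.maximalIdeal ℤ_[2] := by
    rwa [PadicInt.maximalIdeal_eq_span_p, Ideal.mem_span_singleton]
  rw [Pr, add_sub_assoc, ← IsLocalRing.notMem_maximalIdeal, Ideal.add_mem_iff_left _ hmem,
    IsLocalRing.notMem_maximalIdeal]
  exact isUnit_one.neg.pow _

theorem Pr_id (r : ℕ) (x : List Bool) : Pr r id x = 1 := by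
  simp [Pr, Qr, par]

theorem Pr_comp (hr : 1 ≤ r) (hσ : σ ∈ Mset r) (hτ : IsTreeAut τ) (x : List Bool) :
    Pr r (σ ∘ τ) x = Pr r σ [] * Pr r τ x := by
  have hP : Pr r σ [] =
      (-1) ^ par σ (τ x) + Qr r σ (τ x ++ [true]) - Qr r σ (τ x ++ [false]) := hσ.2 _ _
  rw [Pr, Qr_comp hr hσ hτ, Qr_comp hr hσ hτ, hσ.1.neg_one_pow_par_comp hτ, Pr.eq_def r τ x]
  linear_combination hτ.apply_append_true_sub_apply_append_false x (Qr r σ) -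
    (-1) ^ par τ x * hP

end Series

theorem Pr_hom_ker_general (r : ℕ) (hr : 1 ≤ r) :
    (∀ σ x, IsUnit (Pr r σ x)) ∧
    (∀ x, Pr r id x = 1) ∧
    (∀ σ τ : List Bool → List Bool, σ ∈ Mset r → IsTreeAut τ → ∀ x,
      Pr r (σ ∘ τ) x = Pr r σ [] * Pr r τ x) ∧
    (∀ σ ∈ Mset r, (Pr r σ [] = 1 ↔ σ ∈ Bset r)) :=
  ⟨isUnit_Pr r, Pr_id r, fun _ _ => Pr_comp hr, fun _ hσ => (and_iff_right hσ).symm⟩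

/-- For every `r ≥ 1`, the map `P_r : M_{r,∞} → ℤ₂^×` sending `σ` to its
common value `P_r(σ)` (here realized as `Pr r σ []`) is a group homomorphism whose kernel
is exactly `B_{r,∞}`: each value is a unit of `ℤ₂`, the identity goes to `1`, the map is
multiplicative, and an element of `M_{r,∞}` maps to `1` iff it lies in `B_{r,∞}`. -/
theorem Pr_hom_ker (r : ℕ) (hr : 1 ≤ r) :
    (∀ σ ∈ Mset r, IsUnit (Pr r σ [])) ∧
    (Pr r id [] = 1) ∧
    (∀ σ τ : List Bool → List Bool, σ ∈ Mset r → τ ∈ Mset r →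
      Pr r (σ ∘ τ) [] = Pr r σ [] * Pr r τ []) ∧
    (∀ σ ∈ Mset r, (Pr r σ [] = 1 ↔ σ ∈ Bset r)) := by
  obtain ⟨isUnit, map_id, map_comp, ker⟩ := Pr_hom_ker_general r hr
  exact ⟨fun σ _ => isUnit σ [], map_id [], fun σ τ hσ hτ => map_comp σ τ hσ hτ.1 [], ker⟩
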